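/- With ∇ torsion-free, the inverse of the formal exponential map satisfies: pbw^{-1}(X_0·X_1⋯X_n) ≡ X_0⊙⋯⊙X_n + Σ_{j<k} X_0⊙⋯⊙X̂_j⊙⋯⊙X̂_k⊙⋯⊙X_n ⊙ (∇_{X_j}X_k) modulo S^{≤ n−1}(L). -/

import Mathlib

/-! STATEMENT 7: with `∇` torsion-free,
`pbw⁻¹(X_0·X_1⋯X_n) ≡ X_0⊙⋯⊙X_n + Σ_{j<k} X_0⊙⋯X̂_j⋯X̂_k⋯⊙X_n ⊙ (∇_{X_j}X_k)`
modulo `S^{≤n−1}(L)`.  Since `pbw` is injective, this is expressed as: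
`X_0·X_1⋯X_n − pbw(X_0⊙⋯⊙X_n + Σ_{j<k} …) ∈ pbw(S^{≤n−1}(L))`. -/

noncomputable section

def EMap {L U : Type*} [Ring U] [Algebra ℚ U] (j : L → U) (nab : L → L → L) :
    (n : ℕ) → (Fin n → L) → U
  | 0, _ => 1
  | (n + 1), X =>
      (((n : ℚ) + 1)⁻¹) •
        ((∑ k : Fin (n + 1), j (X k) * EMap j nab n (X ∘ k.succAbove)) -
          ∑ k : Fin (n + 1), ∑ m : Fin n,
            EMap j nab n
              (Function.update (X ∘ k.succAbove) m (nab (X k) (X (k.succAbove m)))))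

inductive SymRel (A L : Type*) [CommRing A] [AddCommGroup L] [Module A L] :
    TensorAlgebra A L → TensorAlgebra A L → Prop
  | mk (x y : L) :
      SymRel A L (TensorAlgebra.ι A x * TensorAlgebra.ι A y)
        (TensorAlgebra.ι A y * TensorAlgebra.ι A x)

abbrev SymmAlgebra (A L : Type*) [CommRing A] [AddCommGroup L] [Module A L] :=
  RingQuot (SymRel A L)

def ιSym (A L : Type*) [CommRing A] [AddCommGroup L] [Module A L] :
    L →ₗ[A] SymmAlgebra A L :=
  (RingQuot.mkAlgHom A (SymRel A L)).toLinearMap.comp (TensorAlgebra.ι A)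

def symMonomial (A : Type*) {L : Type*} [CommRing A] [AddCommGroup L] [Module A L]
    (n : ℕ) (X : Fin n → L) : SymmAlgebra A L :=
  (List.ofFn fun i => ιSym A L (X i)).prod

/-- The filtration `S^{≤n}(L)` of `S_A(L)` by symmetric degree. -/
def Sfil (A L : Type*) [CommRing A] [AddCommGroup L] [Module A L] (n : ℕ) :
    Submodule A (SymmAlgebra A L) :=
  Submodule.span A
    {x | ∃ m ≤ n, ∃ X : Fin m → L, x = symMonomial A m X}

/-!
Forget that `L` is a module: let `φ` be the formal exponential on the polynomial ring
`MvPolynomial L ℚ` over the bare set `L`, where `∇_x` acts as the derivation `y ↦ ∇_x y`.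
The defect `C_x p = j x * φ p - φ (∇_x p) - φ (x * p)` measures how far `φ` is from turning
`x * p + ∇_x p` into left multiplication by `j x`. The recursion for `φ` says that, over all ways
of splitting a monomial as `x * p`, the defects `C_x p` sum to zero. Vanishing torsion makes
`C_x (y * r) - C_y (x * r)` a curvature term plus defects of shorter polynomials, so all the
summands agree modulo lower order, and each of them is of lower order. Hence
`j x * φ p ≡ φ (x * p + ∇_x p)`, and iterating over `X_0, …, X_n` collects one term `∇_{X_j} X_k`
for each pair `j < k`.
-/

section Leibniz

variable {R B : Type*} [CommSemiring R] [CommSemiring B] [Algebra R B] (D : Derivation R B B)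

theorem derivation_prod_eq_sum_update {n : ℕ} (f : Fin n → B) :
    D (∏ i, f i) = ∑ m, ∏ i, Function.update f m (D (f m)) i := by
  induction n with
  | zero => simp
  | succ n ih =>
    simp only [Fin.prod_univ_succ, Fin.sum_univ_succ, Derivation.leibniz, ih, smul_eq_mul,
      Function.update_self, Finset.mul_sum]
    rw [add_comm, mul_comm]
    simp [Function.update_apply, (Fin.succ_ne_zero _).symm]

theorem derivation_prod_eq_sum_eraseIdx {n : ℕ} (f : Fin n → B) :
    D (∏ i, f i) = ∑ k : Fin n, ((List.ofFn f).eraseIdx k).prod * D (f k) := by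
  induction n with
  | zero => simp
  | succ n ih =>
    simp [Fin.prod_univ_succ, Fin.sum_univ_succ, ih, Finset.mul_sum, List.prod_ofFn, mul_assoc,
      add_comm]

end Leibniz

theorem mem_of_sum_eq_zero_of_sub_mem {K V κ : Type*} [DivisionRing K] [CharZero K]
    [AddCommGroup V] [Module K V] [Fintype κ] (M : Submodule K V) {f : κ → V}
    (hsum : ∑ k, f k = 0) (i : κ) (hsub : ∀ k, f k - f i ∈ M) : f i ∈ M := by
  have hcard : (Fintype.card κ : K) ≠ 0 := Nat.cast_ne_zero.2 (Fintype.card_pos_iff.2 ⟨i⟩).ne'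
  have hmem : ∑ k, (f k - f i) ∈ M := sum_mem fun k _ => hsub k
  rwa [Finset.sum_sub_distrib, hsum, zero_sub, neg_mem_iff, Finset.sum_const, Finset.card_univ,
    ← Nat.cast_smul_eq_nsmul K, M.smul_mem_iff hcard] at hmem

section PolynomialRing

open MvPolynomial

variable {L : Type*}

variable (L) in
/-- The polynomials of degree `< n`. The strict inequality makes `monomialSpan L 0` zero, so that
lowering the degree by one is expressible for constants too. -/
def monomialSpan (n : ℕ) : Submodule ℚ (MvPolynomial L ℚ) :=
  Submodule.span ℚ {p | ∃ m < n, ∃ Y : Fin m → L, p = ∏ i, X (Y i)}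

theorem prod_X_mem_monomialSpan {m n : ℕ} (h : m < n) (Y : Fin m → L) :
    ∏ i, X (Y i) ∈ monomialSpan L n :=
  Submodule.subset_span ⟨m, h, Y, rfl⟩

theorem monomialSpan_mono {m n : ℕ} (h : m ≤ n) : monomialSpan L m ≤ monomialSpan L n :=
  Submodule.span_mono fun _ ⟨k, hk, Y, hY⟩ => ⟨k, hk.trans_le h, Y, hY⟩

theorem monomialSpan_zero : monomialSpan L 0 = ⊥ := by
  simp [monomialSpan]

theorem X_mul_mem_monomialSpan {n : ℕ} (x : L) {p : MvPolynomial L ℚ}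
    (hp : p ∈ monomialSpan L n) : X x * p ∈ monomialSpan L (n + 1) := by
  suffices monomialSpan L n ≤ (monomialSpan L (n + 1)).comap (LinearMap.mulLeft ℚ (X x)) from
    this hp
  refine Submodule.span_le.2 ?_
  rintro _ ⟨m, hm, Y, rfl⟩
  exact Submodule.subset_span ⟨m + 1, by lia, Fin.cons x Y, by simp [Fin.prod_univ_succ]⟩

/-- The action of a connection on polynomials in the elements of `L`: the derivation extending
`y ↦ ∇_x y`. -/
def covDeriv (nab : L → L → L) (x : L) : Derivation ℚ (MvPolynomial L ℚ) (MvPolynomial L ℚ) :=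
  mkDerivation ℚ fun y => X (nab x y)

@[simp]
theorem covDeriv_X (nab : L → L → L) (x y : L) : covDeriv nab x (X y) = X (nab x y) :=
  mkDerivation_X ..

theorem covDeriv_prod_X (nab : L → L → L) (x : L) {n : ℕ} (Y : Fin n → L) :
    covDeriv nab x (∏ i, X (Y i)) =
      ∑ m, ∏ i, X (Function.update Y m (nab x (Y m)) i) := by
  simp only [derivation_prod_eq_sum_update, covDeriv_X]
  simp only [Function.update_apply, apply_ite X]

theorem covDeriv_mem_monomialSpan (nab : L → L → L) (x : L) {n : ℕ} {p : MvPolynomial L ℚ}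
    (hp : p ∈ monomialSpan L n) : covDeriv nab x p ∈ monomialSpan L n := by
  suffices monomialSpan L n ≤
      (monomialSpan L n).comap (covDeriv nab x : MvPolynomial L ℚ →ₗ[ℚ] MvPolynomial L ℚ) from
    this hp
  refine Submodule.span_le.2 ?_
  rintro _ ⟨m, hm, Y, rfl⟩
  simp only [SetLike.mem_coe, Submodule.mem_comap, Derivation.coeFn_coe, covDeriv_prod_X]
  exact sum_mem fun _ _ => prod_X_mem_monomialSpan hm _

/-- The second-order part `Σ_{j<k} Y_0 ⋯ Ŷ_j ⋯ Ŷ_k ⋯ Y_{n-1} · ∇_{Y_j} Y_k` of the inverse formal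
exponential. Erasing the later index `k` first leaves the position `j` unchanged. -/
def connectionSum (nab : L → L → L) {n : ℕ} (Y : Fin n → L) : MvPolynomial L ℚ :=
  ∑ k : Fin n, ∑ j ∈ Finset.univ.filter (fun t : Fin n => t < k),
    (((List.ofFn fun i => X (Y i)).eraseIdx (k : ℕ)).eraseIdx (j : ℕ)).prod * X (nab (Y j) (Y k))

theorem connectionSum_succ (nab : L → L → L) {n : ℕ} (Y : Fin (n + 1) → L) :
    connectionSum nab Y =
      covDeriv nab (Y 0) (∏ i : Fin n, X (Y i.succ)) +
        X (Y 0) * connectionSum nab fun i => Y i.succ := by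
  simp only [connectionSum, Finset.sum_filter, derivation_prod_eq_sum_eraseIdx, covDeriv_X]
  rw [Fin.sum_univ_succ]
  simp [Fin.sum_univ_succ, Finset.mul_sum, Finset.sum_add_distrib, mul_assoc]

theorem connectionSum_mem_monomialSpan (nab : L → L → L) {n : ℕ} (Y : Fin n → L) :
    connectionSum nab Y ∈ monomialSpan L n := by
  induction n with
  | zero => simp [connectionSum]
  | succ n ih =>
    rw [connectionSum_succ]
    exact add_mem
      (covDeriv_mem_monomialSpan nab _ (prod_X_mem_monomialSpan n.lt_succ_self _))
      (X_mul_mem_monomialSpan _ (ih _))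

variable {U : Type*} [Ring U] [Algebra ℚ U]

/-- `φ` is the formal exponential map of `nab`, read on polynomials in the elements of `L`. -/
def IsFormalExp (j : L → U) (nab : L → L → L) (φ : MvPolynomial L ℚ →ₗ[ℚ] U) : Prop :=
  ∀ (n : ℕ) (Y : Fin n → L), φ (∏ i, X (Y i)) = EMap j nab n Y

/-- The failure of `φ` to turn the operator `p ↦ X x * p + ∇_x p` into left multiplication by
`j x`. -/
def mulDefect (j : L → U) (nab : L → L → L) (φ : MvPolynomial L ℚ →ₗ[ℚ] U) (x : L) :
    MvPolynomial L ℚ →ₗ[ℚ] U :=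
  LinearMap.mulLeft ℚ (j x) ∘ₗ φ -
    φ ∘ₗ (LinearMap.mulLeft ℚ (X x) + (covDeriv nab x).toLinearMap)

variable {j : L → U} {nab : L → L → L} {φ : MvPolynomial L ℚ →ₗ[ℚ] U}

theorem mulDefect_apply (x : L) (p : MvPolynomial L ℚ) :
    mulDefect j nab φ x p = j x * φ p - φ (X x * p + covDeriv nab x p) :=
  rfl

theorem mul_map_eq_add_mulDefect (x : L) (p : MvPolynomial L ℚ) :
    j x * φ p = φ (X x * p + covDeriv nab x p) + mulDefect j nab φ x p :=
  (add_sub_cancel _ _).symm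

theorem IsFormalExp.sum_mulDefect_eq_zero (hφ : IsFormalExp j nab φ) {n : ℕ}
    (Y : Fin (n + 1) → L) :
    ∑ k, mulDefect j nab φ (Y k) (∏ i, X (Y (k.succAbove i))) = 0 := by
  have hrec : ((n : ℚ) + 1) • φ (∏ i, X (Y i)) =
      ∑ k, j (Y k) * φ (∏ i, X (Y (k.succAbove i))) -
        ∑ k, φ (covDeriv nab (Y k) (∏ i, X (Y (k.succAbove i)))) := by
    have h := hφ (n + 1) Y
    rw [EMap, eq_inv_smul_iff₀ (by positivity)] at h
    simpa only [covDeriv_prod_X, map_sum, hφ _ _, Function.comp_def] using h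
  have hsplit (k : Fin (n + 1)) : X (Y k) * ∏ i, X (Y (k.succAbove i)) =
      ∏ i, (X (Y i) : MvPolynomial L ℚ) :=
    (Fin.prod_univ_succAbove (fun i => X (Y i)) k).symm
  have hconst : ∑ _k : Fin (n + 1), φ (∏ i, X (Y i)) = ((n : ℚ) + 1) • φ (∏ i, X (Y i)) := by
    rw [Fin.sum_const, ← Nat.cast_smul_eq_nsmul ℚ, Nat.cast_succ]
  simp only [mulDefect_apply, map_add, hsplit, Finset.sum_sub_distrib, Finset.sum_add_distrib]
  rw [hconst, hrec, sub_add_cancel, sub_self]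

theorem mulDefect_X_mul_sub_swap
    (htf : ∀ x y, j x * j y - j y * j x = j (nab x y) - j (nab y x)) (x y : L)
    (r : MvPolynomial L ℚ) :
    mulDefect j nab φ x (X y * r) - mulDefect j nab φ y (X x * r) =
      φ (covDeriv nab (nab x y) r - covDeriv nab (nab y x) r -
          (covDeriv nab x (covDeriv nab y r) - covDeriv nab y (covDeriv nab x r))) +
        (mulDefect j nab φ (nab x y) r - mulDefect j nab φ (nab y x) r) -
        (mulDefect j nab φ x (covDeriv nab y r) - mulDefect j nab φ y (covDeriv nab x r)) -
        (j x * mulDefect j nab φ y r - j y * mulDefect j nab φ x r) := by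
  have hbr : j x * (j y * φ r) - j y * (j x * φ r) = j (nab x y) * φ r - j (nab y x) * φ r := by
    rw [← mul_assoc, ← mul_assoc, ← sub_mul, htf, sub_mul]
  have hcomm : X x * (X y * r) = X y * (X x * r) := mul_left_comm ..
  rw [eq_comm, ← sub_eq_zero] at hbr ⊢
  rw [← hbr]
  simp only [mulDefect_apply, Derivation.leibniz, smul_eq_mul, covDeriv_X, map_sub, map_add,
    mul_sub, mul_add, hcomm, mul_comm r]
  abel

section LowerOrder

variable {n : ℕ}

theorem mul_mem_map_monomialSpan
    (hC : ∀ x, ∀ p ∈ monomialSpan L n, mulDefect j nab φ x p ∈ (monomialSpan L (n + 1)).map φ)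
    (x : L) {u : U} (hu : u ∈ (monomialSpan L n).map φ) :
    j x * u ∈ (monomialSpan L (n + 1)).map φ := by
  obtain ⟨p, hp, rfl⟩ := hu
  rw [mul_map_eq_add_mulDefect (nab := nab)]
  refine add_mem (Submodule.mem_map_of_mem (add_mem (X_mul_mem_monomialSpan x hp) ?_)) (hC x p hp)
  exact monomialSpan_mono n.le_succ (covDeriv_mem_monomialSpan nab x hp)

theorem mulDefect_X_mul_sub_swap_mem
    (htf : ∀ x y, j x * j y - j y * j x = j (nab x y) - j (nab y x))
    (hC : ∀ x, ∀ p ∈ monomialSpan L (n + 1), mulDefect j nab φ x p ∈ (monomialSpan L n).map φ)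
    (x y : L) {r : MvPolynomial L ℚ} (hr : r ∈ monomialSpan L (n + 1)) :
    mulDefect j nab φ x (X y * r) - mulDefect j nab φ y (X x * r) ∈
      (monomialSpan L (n + 1)).map φ := by
  have hmono := Submodule.map_mono (f := φ) (monomialSpan_mono (L := L) n.le_succ)
  have hcov (z : L) {p : MvPolynomial L ℚ} (hp : p ∈ monomialSpan L (n + 1)) :
      covDeriv nab z p ∈ monomialSpan L (n + 1) :=
    covDeriv_mem_monomialSpan nab z hp
  have hmul (z w : L) : j z * mulDefect j nab φ w r ∈ (monomialSpan L (n + 1)).map φ :=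
    mul_mem_map_monomialSpan
      (fun x p hp => hmono (hC x p (monomialSpan_mono n.le_succ hp))) z (hC w r hr)
  rw [mulDefect_X_mul_sub_swap htf]
  refine sub_mem (sub_mem (add_mem (Submodule.mem_map_of_mem ?_) ?_) ?_)
    (sub_mem (hmul x y) (hmul y x))
  · exact sub_mem (sub_mem (hcov _ hr) (hcov _ hr))
      (sub_mem (hcov x (hcov y hr)) (hcov y (hcov x hr)))
  · exact hmono (sub_mem (hC _ _ hr) (hC _ _ hr))
  · exact hmono (sub_mem (hC _ _ (hcov y hr)) (hC _ _ (hcov x hr)))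

theorem IsFormalExp.mulDefect_prod_mem (hφ : IsFormalExp j nab φ) {M : Submodule ℚ U}
    (hM : ∀ x y : L, ∀ r ∈ monomialSpan L n,
      mulDefect j nab φ x (X y * r) - mulDefect j nab φ y (X x * r) ∈ M)
    (x : L) (Y : Fin n → L) : mulDefect j nab φ x (∏ i, X (Y i)) ∈ M := by
  refine mem_of_sum_eq_zero_of_sub_mem M
    (hφ.sum_mulDefect_eq_zero (Fin.cons x Y : Fin (n + 1) → L)) 0 fun k => ?_
  induction k using Fin.cases with
  | zero => simp
  | succ i =>
    obtain _ | n := n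
    · exact i.elim0
    · have hcons : ∏ l, X ((Fin.cons x Y : Fin (n + 2) → L) (i.succ.succAbove l)) =
          X x * ∏ l, (X (Y (i.succAbove l)) : MvPolynomial L ℚ) := by
        simp [Fin.prod_univ_succ]
      have hY : ∏ l, X (Y l) = X (Y i) * ∏ l, (X (Y (i.succAbove l)) : MvPolynomial L ℚ) :=
        Fin.prod_univ_succAbove _ i
      simpa only [hcons, Fin.cons_succ, Fin.cons_zero, Fin.zero_succAbove, hY] using
        hM (Y i) x _ (prod_X_mem_monomialSpan n.lt_succ_self _)

theorem IsFormalExp.mulDefect_mem_of_swap (hφ : IsFormalExp j nab φ)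
    (hswap : ∀ x y : L, ∀ r ∈ monomialSpan L n,
      mulDefect j nab φ x (X y * r) - mulDefect j nab φ y (X x * r) ∈ (monomialSpan L n).map φ)
    (x : L) {p : MvPolynomial L ℚ} (hp : p ∈ monomialSpan L (n + 1)) :
    mulDefect j nab φ x p ∈ (monomialSpan L n).map φ := by
  suffices monomialSpan L (n + 1) ≤ ((monomialSpan L n).map φ).comap (mulDefect j nab φ x) from
    this hp
  refine Submodule.span_le.2 ?_
  rintro _ ⟨m, hm, Y, rfl⟩
  exact hφ.mulDefect_prod_mem
    (fun x y r hr => hswap x y r (monomialSpan_mono (Nat.le_of_lt_succ hm) hr)) x Y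

theorem IsFormalExp.mulDefect_mem (hφ : IsFormalExp j nab φ)
    (htf : ∀ x y, j x * j y - j y * j x = j (nab x y) - j (nab y x)) (x : L)
    {p : MvPolynomial L ℚ} (hp : p ∈ monomialSpan L (n + 1)) :
    mulDefect j nab φ x p ∈ (monomialSpan L n).map φ := by
  induction n generalizing x p with
  | zero =>
    refine hφ.mulDefect_mem_of_swap (fun x y r hr => ?_) x hp
    obtain rfl : r = 0 := by simpa only [monomialSpan_zero, Submodule.mem_bot] using hr
    simp
  | succ n ih =>
    exact hφ.mulDefect_mem_of_swap
      (fun x y r hr => mulDefect_X_mul_sub_swap_mem htf (fun x p hp => ih x hp) x y hr) x hp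

theorem IsFormalExp.prod_sub_map_mem (hφ : IsFormalExp j nab φ)
    (htf : ∀ x y, j x * j y - j y * j x = j (nab x y) - j (nab y x))
    (Y : Fin (n + 1) → L) :
    (List.ofFn fun i => j (Y i)).prod - φ (∏ i, X (Y i) + connectionSum nab Y) ∈
      (monomialSpan L n).map φ := by
  induction n with
  | zero =>
    have hX : φ (X (Y 0)) = j (Y 0) := by simpa [EMap] using hφ 1 Y
    simp [connectionSum, hX]
  | succ n ih =>
    set Z : Fin (n + 1) → L := fun i => Y i.succ with hZ
    set q := ∏ i, X (Z i) + connectionSum nab Z with hq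
    have herr : j (Y 0) * ((List.ofFn fun i => j (Z i)).prod - φ q) ∈
        (monomialSpan L (n + 1)).map φ :=
      mul_mem_map_monomialSpan (nab := nab)
        (fun x p hp => hφ.mulDefect_mem htf x (monomialSpan_mono (by lia) hp)) _ (ih Z)
    have hT : connectionSum nab Z ∈ monomialSpan L (n + 1) := connectionSum_mem_monomialSpan nab Z
    have hdefect : mulDefect j nab φ (Y 0) q ∈ (monomialSpan L (n + 1)).map φ :=
      hφ.mulDefect_mem htf _ <|
        add_mem (prod_X_mem_monomialSpan (n + 1).lt_succ_self Z) (monomialSpan_mono (by lia) hT)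
    have hcov : φ (covDeriv nab (Y 0) (connectionSum nab Z)) ∈ (monomialSpan L (n + 1)).map φ :=
      Submodule.mem_map_of_mem (covDeriv_mem_monomialSpan nab _ hT)
    convert add_mem (add_mem herr hdefect) hcov using 1
    rw [mulDefect_apply, mul_sub, List.ofFn_succ, List.prod_cons, connectionSum_succ,
      Fin.prod_univ_succ, ← hZ, hq]
    simp only [map_add, mul_add, hZ]
    abel

end LowerOrder

end PolynomialRing

section Transfer

variable {A L : Type*} [CommRing A] [AddCommGroup L] [Module A L]

theorem ιSym_mul_comm (x y : L) : ιSym A L x * ιSym A L y = ιSym A L y * ιSym A L x := by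
  simpa only [map_mul] using! RingQuot.mkAlgHom_rel A (SymRel.mk (A := A) x y)

theorem adjoin_range_ιSym : Algebra.adjoin A (Set.range (ιSym A L)) = ⊤ := by
  have hsurj := (AlgHom.range_eq_top _).2 (RingQuot.mkAlgHom_surjective A (SymRel A L))
  rw [← hsurj, ← Algebra.map_top, ← TensorAlgebra.adjoin_range_ι, AlgHom.map_adjoin,
    ← Set.range_comp]
  rfl

instance SymmAlgebra.instCommRing : CommRing (SymmAlgebra A L) where
  mul_comm a b := by
    have hcomm := Algebra.isMulCommutative_adjoin A (s := Set.range (ιSym A L)) <| by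
      rintro _ ⟨x, rfl⟩ _ ⟨y, rfl⟩
      exact ιSym_mul_comm x y
    rw [adjoin_range_ιSym] at hcomm
    exact congrArg Subtype.val (hcomm.is_comm.comm ⟨a, trivial⟩ ⟨b, trivial⟩)

theorem symMonomial_eq_prod (n : ℕ) (X : Fin n → L) :
    symMonomial A n X = ∏ i, ιSym A L (X i) :=
  List.prod_ofFn

variable [Algebra ℚ A]

variable (A L) in
/-- The projection of the polynomial ring over the bare set `L` onto `S_A(L)`. -/
def toSymm : MvPolynomial L ℚ →+* SymmAlgebra A L :=
  MvPolynomial.eval₂Hom ((algebraMap A _).comp (algebraMap ℚ A)) (ιSym A L)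

theorem toSymm_X (x : L) : toSymm A L (MvPolynomial.X x) = ιSym A L x :=
  MvPolynomial.eval₂Hom_X' ..

theorem toSymm_prod_X {n : ℕ} (X : Fin n → L) :
    toSymm A L (∏ i, MvPolynomial.X (X i)) = symMonomial A n X := by
  simp only [map_prod, toSymm_X, symMonomial_eq_prod]

theorem toSymm_connectionSum (nab : L → L → L) {n : ℕ} (X : Fin n → L) :
    toSymm A L (connectionSum nab X) =
      ∑ k : Fin n, ∑ j ∈ Finset.univ.filter (fun t : Fin n => t < k),
        (((List.ofFn fun i => ιSym A L (X i)).eraseIdx (k : ℕ)).eraseIdx (j : ℕ)).prod *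
          ιSym A L (nab (X j) (X k)) := by
  simp only [connectionSum, map_sum, map_mul, map_list_prod, ← List.eraseIdx_map, List.map_ofFn,
    Function.comp_def, toSymm_X]

theorem toSymm_mem_Sfil {n : ℕ} {p : MvPolynomial L ℚ} (hp : p ∈ monomialSpan L (n + 1)) :
    toSymm A L p ∈ Sfil A L n := by
  induction hp using Submodule.span_induction with
  | mem p hp =>
    obtain ⟨m, hm, Y, rfl⟩ := hp
    exact Submodule.subset_span ⟨m, Nat.le_of_lt_succ hm, Y, toSymm_prod_X Y⟩
  | zero => simp
  | add p q _ _ hp hq => simpa only [map_add] using add_mem hp hq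
  | smul c p _ hp =>
    have hc : toSymm A L (c • p) = algebraMap ℚ A c • toSymm A L p := by
      rw [MvPolynomial.smul_eq_C_mul, map_mul, Algebra.smul_def]
      simp [toSymm]
    exact hc ▸ Submodule.smul_mem _ _ hp

variable {U : Type*} [Ring U] [Algebra ℚ U] [Module A U]

/-- A map on `S_A(L)` as a `ℚ`-linear map on the polynomial ring over the bare set `L`. -/
def polyLift (f : SymmAlgebra A L →ₗ[A] U) : MvPolynomial L ℚ →ₗ[ℚ] U :=
  (f.toAddMonoidHom.comp (toSymm A L).toAddMonoidHom).toRatLinearMap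

theorem polyLift_apply (f : SymmAlgebra A L →ₗ[A] U) (p : MvPolynomial L ℚ) :
    polyLift f p = f (toSymm A L p) :=
  rfl

end Transfer

theorem pbw_inv_highest_order_terms_general
    {A L U : Type*} [CommRing A] [Algebra ℚ A] [AddCommGroup L] [Module A L]
    [Ring U] [Algebra ℚ U] [Module A U] (j : L → U) (nab : L → L → L)
    (htf : ∀ X Y : L, j X * j Y - j Y * j X = j (nab X Y) - j (nab Y X))
    (pbw : SymmAlgebra A L →ₗ[A] U)
    (hpbw : ∀ (n : ℕ) (X : Fin n → L), pbw (symMonomial A n X) = EMap j nab n X)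
    (n : ℕ) (X : Fin (n + 2) → L) :
    (List.ofFn fun i => j (X i)).prod -
        pbw (symMonomial A (n + 2) X +
          ∑ k : Fin (n + 2), ∑ jj ∈ Finset.univ.filter (fun t : Fin (n + 2) => t < k),
            (((List.ofFn fun i => ιSym A L (X i)).eraseIdx (k : ℕ)).eraseIdx (jj : ℕ)).prod *
              ιSym A L (nab (X jj) (X k)))
      ∈ Submodule.map pbw (Sfil A L n) := by
  have hφ : IsFormalExp j nab (polyLift pbw) := fun m Y => by
    rw [polyLift_apply, toSymm_prod_X, hpbw]
  obtain ⟨p, hp, hpX⟩ := hφ.prod_sub_map_mem htf X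
  refine ⟨toSymm A L p, toSymm_mem_Sfil hp, ?_⟩
  rw [← polyLift_apply, hpX, polyLift_apply, map_add, toSymm_prod_X, toSymm_connectionSum]

theorem pbw_inv_highest_order_terms
    {A L U : Type*} [CommRing A] [Algebra ℚ A]
    [LieRing L] [Module A L] [Module.Projective A L]
    [Ring U] [Algebra ℚ U] [Module A U]
    (ι : A →+* U) (j : L → U) (ρ : L → A → A) (nab : L → L → L)
    (hAU : ∀ (a : A) (u : U), a • u = ι a * u)
    (hj_add : ∀ X Y : L, j (X + Y) = j X + j Y)
    (hj_smul : ∀ (a : A) (X : L), j (a • X) = ι a * j X)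
    (hρ_der : ∀ (X : L) (a b : A), ρ X (a * b) = a * ρ X b + b * ρ X a)
    (hcomm : ∀ (X : L) (a : A), j X * ι a = ι a * j X + ι (ρ X a))
    (hbr : ∀ X Y : L, j X * j Y - j Y * j X = j ⁅X, Y⁆)
    (hnab_smul₁ : ∀ (a : A) (X Y : L), nab (a • X) Y = a • nab X Y)
    (hnab_smul₂ : ∀ (a : A) (X Y : L), nab X (a • Y) = ρ X a • Y + a • nab X Y)
    (htf : ∀ X Y : L, nab X Y - nab Y X = ⁅X, Y⁆)
    (pbw : SymmAlgebra A L →ₗ[A] U)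
    (hpbw : ∀ (n : ℕ) (X : Fin n → L), pbw (symMonomial A n X) = EMap j nab n X)
    -- `pbw` is a (filtered) isomorphism
    (hbij : Function.Bijective pbw)
    (n : ℕ) (X : Fin (n + 2) → L) :
    (List.ofFn fun i => j (X i)).prod -
        pbw (symMonomial A (n + 2) X +
          ∑ k : Fin (n + 2), ∑ jj ∈ Finset.univ.filter (fun t : Fin (n + 2) => t < k),
            (((List.ofFn fun i => ιSym A L (X i)).eraseIdx (k : ℕ)).eraseIdx (jj : ℕ)).prod *
              ιSym A L (nab (X jj) (X k)))
      ∈ Submodule.map pbw (Sfil A L n) := by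
  refine pbw_inv_highest_order_terms_general j nab (fun Y Z => ?_) pbw hpbw n X
  rw [hbr, ← htf, ← AddMonoidHom.mk'_apply j hj_add, map_sub]

end
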